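/- Let X and Y be independent exponentially distributed random variables with means m_x > 0 and m_y > 0, and let C > 0 be a constant with m_x ≠ C·m_y. Then E[ln(X + C·Y)] = (1/(m_x − C·m_y)) · ( m_x·(ln m_x − γ) − C·m_y·(ln(C·m_y) − γ) ), where γ is the Euler–Mascheroni constant. -/

import Mathlib

open MeasureTheory ProbabilityTheory Real

/-!
For rates `r < s` the characteristic function `z ↦ r / (r - i z)` of the exponential law turns a
partial fraction decomposition into the identity of positive measures
`s • Exp r = r • Exp s + (s - r) • (Exp r ∗ Exp s)`. Hence every expectation under the
hypoexponential law `Exp r ∗ Exp s` is a linear combination of two exponential expectations. For the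
logarithm these reduce by scaling to rate `1`, where the integral of `log t * exp (-t)` over `t > 0`
is the derivative of `Γ` at `1`, which is `-γ`.
-/

section CharFun

variable {E : Type*} [MeasurableSpace E] [NormedAddCommGroup E] [InnerProductSpace ℝ E]

theorem charFun_smul_measure (c : ENNReal) (μ : Measure E) (t : E) :
    charFun (c • μ) t = c.toReal * charFun μ t := by
  simp only [charFun_apply, integral_smul_measure, Complex.real_smul]

variable [OpensMeasurableSpace E]

theorem integrable_exp_inner_mul_I (μ : Measure E) [IsFiniteMeasure μ] (t : E) :
    Integrable (fun x ↦ Complex.exp (inner ℝ x t * Complex.I)) μ := by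
  refine .of_bound (Continuous.aestronglyMeasurable (by fun_prop)) 1 (.of_forall fun x ↦ ?_)
  rw [Complex.norm_exp_ofReal_mul_I]

theorem charFun_add_measure (μ ν : Measure E) [IsFiniteMeasure μ] [IsFiniteMeasure ν] (t : E) :
    charFun (μ + ν) t = charFun μ t + charFun ν t :=
  integral_add_measure (integrable_exp_inner_mul_I μ t) (integrable_exp_inner_mul_I ν t)

end CharFun

section Exponential

variable {E : Type*} [NormedAddCommGroup E] [NormedSpace ℝ E] {r s : ℝ}

theorem integral_expMeasure (hr : 0 ≤ r) (f : ℝ → E) :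
    ∫ x, f x ∂expMeasure r = ∫ x in Set.Ioi 0, (r * exp (-(r * x))) • f x := by
  have hdensity : ∀ x, (exponentialPDF r x).toReal • f x
      = (Set.Ici 0).indicator (fun x ↦ (r * exp (-(r * x))) • f x) x := by
    intro x
    by_cases hx : 0 ≤ x
    · rw [Set.indicator_of_mem (Set.mem_Ici.2 hx), exponentialPDF_of_nonneg hx,
        ENNReal.toReal_ofReal (by positivity)]
    · rw [Set.indicator_of_notMem (by simpa using hx), exponentialPDF_of_neg (not_le.1 hx),
        ENNReal.toReal_zero, zero_smul]
  calc ∫ x, f x ∂expMeasure r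
      = ∫ x, (exponentialPDF r x).toReal • f x :=
        integral_withDensity_eq_integral_toReal_smul
          (measurable_exponentialPDFReal r).ennreal_ofReal
          (.of_forall fun _ ↦ ENNReal.ofReal_lt_top) f
    _ = ∫ x in Set.Ioi 0, (r * exp (-(r * x))) • f x := by
        simp only [hdensity, integral_indicator measurableSet_Ici, integral_Ici_eq_integral_Ioi]

theorem charFun_expMeasure (hr : 0 < r) (t : ℝ) :
    charFun (expMeasure r) t = r / (r - t * Complex.I) := by
  have hexp : ∀ x : ℝ, (r * exp (-(r * x))) • Complex.exp (t * x * Complex.I)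
      = r * Complex.exp ((-(r - t * Complex.I)) * x) := by
    intro x
    rw [Complex.real_smul, Complex.ofReal_mul, Complex.ofReal_exp, mul_assoc, ← Complex.exp_add]
    push_cast
    ring_nf
  rw [charFun_apply_real, integral_expMeasure hr.le]
  simp only [hexp]
  rw [integral_const_mul, integral_exp_mul_complex_Ioi (by simpa using hr), Complex.ofReal_zero,
    mul_zero, Complex.exp_zero, neg_div_neg_eq, mul_one_div]

theorem ofReal_sub_ofReal_mul_I_ne_zero (hr : r ≠ 0) (t : ℝ) : (r - t * Complex.I : ℂ) ≠ 0 :=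
  fun h ↦ hr (by simpa using congrArg Complex.re h)

theorem map_const_mul_expMeasure (hr : 0 < r) {c : ℝ} (hc : 0 < c) :
    (expMeasure r).map (c * ·) = expMeasure (r / c) := by
  have := isProbabilityMeasure_expMeasure hr
  have := isProbabilityMeasure_expMeasure (div_pos hr hc)
  refine Measure.ext_of_charFun (funext fun t ↦ ?_)
  have hc' : (c : ℂ) ≠ 0 := by exact_mod_cast hc.ne'
  rw [charFun_map_mul, charFun_expMeasure hr, charFun_expMeasure (div_pos hr hc)]
  push_cast
  field_simp

theorem smul_expMeasure_eq_add_conv (hr : 0 < r) (hrs : r ≤ s) :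
    ENNReal.ofReal s • expMeasure r
      = ENNReal.ofReal r • expMeasure s
        + ENNReal.ofReal (s - r) • (expMeasure r ∗ expMeasure s) := by
  have hs : 0 < s := hr.trans_le hrs
  have := isProbabilityMeasure_expMeasure hr
  have := isProbabilityMeasure_expMeasure hs
  have := (expMeasure r).smul_finite (c := ENNReal.ofReal s) ENNReal.ofReal_ne_top
  have := (expMeasure s).smul_finite (c := ENNReal.ofReal r) ENNReal.ofReal_ne_top
  have := (expMeasure r ∗ expMeasure s).smul_finite (c := ENNReal.ofReal (s - r))
    ENNReal.ofReal_ne_top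
  refine Measure.ext_of_charFun (funext fun t ↦ ?_)
  have hrt := ofReal_sub_ofReal_mul_I_ne_zero hr.ne' t
  have hst := ofReal_sub_ofReal_mul_I_ne_zero hs.ne' t
  simp only [charFun_add_measure, charFun_smul_measure, charFun_conv, charFun_expMeasure hr,
    charFun_expMeasure hs, ENNReal.toReal_ofReal hr.le, ENNReal.toReal_ofReal hs.le,
    ENNReal.toReal_ofReal (sub_nonneg.2 hrs)]
  push_cast
  field_simp
  ring

theorem smul_integral_expMeasure_eq_add_integral_conv (hr : 0 < r) (hrs : r < s) {f : ℝ → E}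
    (hf : Integrable f (expMeasure r)) :
    s • ∫ x, f x ∂expMeasure r
      = r • ∫ x, f x ∂expMeasure s + (s - r) • ∫ x, f x ∂(expMeasure r ∗ expMeasure s) := by
  have hdecomp := smul_expMeasure_eq_add_conv hr hrs.le
  have hsmul := hf.smul_measure (ENNReal.ofReal_ne_top (r := s))
  rw [hdecomp, integrable_add_measure] at hsmul
  have hintegral := congrArg (fun μ ↦ ∫ x, f x ∂μ) hdecomp
  simpa only [integral_add_measure hsmul.1 hsmul.2, integral_smul_measure,
    ENNReal.toReal_ofReal hr.le, ENNReal.toReal_ofReal (hr.trans hrs).le,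
    ENNReal.toReal_ofReal (sub_pos.2 hrs).le] using hintegral

theorem integral_conv_expMeasure (hr : 0 < r) (hs : 0 < s) (hrs : r ≠ s) {f : ℝ → E}
    (hfr : Integrable f (expMeasure r)) (hfs : Integrable f (expMeasure s)) :
    ∫ x, f x ∂(expMeasure r ∗ expMeasure s)
      = (s - r)⁻¹ • (s • ∫ x, f x ∂expMeasure r - r • ∫ x, f x ∂expMeasure s) := by
  wlog hlt : r < s generalizing r s
  · have hprob_r := isProbabilityMeasure_expMeasure hr
    have hprob_s := isProbabilityMeasure_expMeasure hs
    rw [Measure.conv_comm, this hs hr hrs.symm hfs hfr (hrs.lt_or_gt.resolve_left hlt),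
      ← neg_sub s r, inv_neg, neg_smul, ← smul_neg, neg_sub]
  · rw [smul_integral_expMeasure_eq_add_integral_conv hr hlt hfr, add_sub_cancel_left,
      inv_smul_smul₀ (sub_pos.2 hlt).ne']

end Exponential

section Log

variable {r s : ℝ}

theorem integral_log_mul_exp_neg_Ioi :
    ∫ t in Set.Ioi (0 : ℝ), log t * exp (-t) = -eulerMascheroniConstant := by
  have hGamma : HasDerivAt Complex.GammaIntegral (-(eulerMascheroniConstant : ℂ)) 1 := by
    refine Complex.hasDerivAt_Gamma_one.congr_of_eventuallyEq ?_
    have hre : ∀ᶠ z : ℂ in nhds 1, 0 < z.re :=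
      Complex.continuous_re.continuousAt.eventually_const_lt (by simp)
    filter_upwards [hre] with z hz using (Complex.Gamma_eq_integral hz).symm
  have hmellin := (Complex.hasDerivAt_GammaIntegral (s := 1) (by simp)).unique hGamma
  simp only [sub_self, Complex.cpow_zero, one_mul, ← Complex.ofReal_mul,
    integral_complex_ofReal] at hmellin
  exact_mod_cast hmellin

theorem integral_log_expMeasure_one : ∫ x, log x ∂expMeasure 1 = -eulerMascheroniConstant := by
  rw [integral_expMeasure zero_le_one, ← integral_log_mul_exp_neg_Ioi]
  simp only [one_mul, smul_eq_mul, mul_comm (exp _)]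

-- A non-integrable function would have Bochner integral `0`, whereas `-γ < 0`.
theorem integrable_log_expMeasure_one : Integrable log (expMeasure 1) := by
  refine .of_integral_ne_zero ?_
  rw [integral_log_expMeasure_one]
  linarith [one_half_lt_eulerMascheroniConstant]

theorem log_const_mul_ae_eq_expMeasure {c : ℝ} (hc : c ≠ 0) :
    (fun x ↦ log (c * x)) =ᵐ[expMeasure r] fun x ↦ log c + log x := by
  have hne : ∀ᵐ x ∂expMeasure r, x ≠ 0 :=
    (withDensity_absolutelyContinuous _ _).ae_le (Measure.ae_ne volume 0)
  filter_upwards [hne] with x hx using log_mul hc hx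

theorem expMeasure_eq_map_expMeasure_one (hr : 0 < r) :
    expMeasure r = (expMeasure 1).map (r⁻¹ * ·) := by
  rw [map_const_mul_expMeasure one_pos (inv_pos.2 hr), one_div, inv_inv]

theorem integrable_log_expMeasure (hr : 0 < r) : Integrable log (expMeasure r) := by
  have := isProbabilityMeasure_expMeasure one_pos
  rw [expMeasure_eq_map_expMeasure_one hr,
    integrable_map_measure measurable_log.aestronglyMeasurable (by fun_prop)]
  exact ((integrable_const _).add integrable_log_expMeasure_one).congr
    (log_const_mul_ae_eq_expMeasure (inv_ne_zero hr.ne')).symm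

theorem integral_log_expMeasure (hr : 0 < r) :
    ∫ x, log x ∂expMeasure r = -log r - eulerMascheroniConstant := by
  have := isProbabilityMeasure_expMeasure one_pos
  rw [expMeasure_eq_map_expMeasure_one hr,
    integral_map (by fun_prop) measurable_log.aestronglyMeasurable,
    integral_congr_ae (log_const_mul_ae_eq_expMeasure (inv_ne_zero hr.ne')),
    integral_add (integrable_const _) integrable_log_expMeasure_one, integral_log_expMeasure_one,
    integral_const, probReal_univ, one_smul, log_inv, sub_eq_add_neg]

theorem integral_log_conv_expMeasure (hr : 0 < r) (hs : 0 < s) (hrs : r ≠ s) :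
    ∫ x, log x ∂(expMeasure r ∗ expMeasure s)
      = (r * log s - s * log r) / (s - r) - eulerMascheroniConstant := by
  rw [integral_conv_expMeasure hr hs hrs (integrable_log_expMeasure hr)
    (integrable_log_expMeasure hs), integral_log_expMeasure hr, integral_log_expMeasure hs]
  simp only [smul_eq_mul]
  field_simp
  ring

end Log

/-- For independent exponential `X`, `Y` with means `m_x`, `m_y` and a constant `C > 0`
with `m_x ≠ C·m_y`:
`E[ln(X + C·Y)] = (1/(m_x - C·m_y))·(m_x·(ln m_x - γ) - C·m_y·(ln(C·m_y) - γ))`,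
where `γ` is the Euler–Mascheroni constant. -/
theorem expectation_log_hypoexponential
    {Ω : Type*} [MeasurableSpace Ω] (μ : Measure Ω) [IsProbabilityMeasure μ]
    (X Y : Ω → ℝ) (mx my C : ℝ) (hmx : 0 < mx) (hmy : 0 < my) (hC : 0 < C)
    (hne : mx ≠ C * my)
    (hXm : Measurable X) (hYm : Measurable Y)
    (hX : Measure.map X μ = expMeasure (1 / mx))
    (hY : Measure.map Y μ = expMeasure (1 / my))
    (hindep : IndepFun X Y μ) :
    ∫ ω, Real.log (X ω + C * Y ω) ∂μ
      = (1 / (mx - C * my))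
        * (mx * (Real.log mx - Real.eulerMascheroniConstant)
          - C * my * (Real.log (C * my) - Real.eulerMascheroniConstant)) := by
  have hCmy : 0 < C * my := mul_pos hC hmy
  have hCYm : Measurable fun ω ↦ C * Y ω := hYm.const_mul C
  have hCY : μ.map (fun ω ↦ C * Y ω) = expMeasure (C * my)⁻¹ := by
    rw [← Function.comp_def (C * ·) Y, ← Measure.map_map (by fun_prop) hYm, hY,
      map_const_mul_expMeasure (by positivity) hC, div_div, mul_comm, one_div]
  have hsum : μ.map (X + fun ω ↦ C * Y ω) = expMeasure mx⁻¹ ∗ expMeasure (C * my)⁻¹ := by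
    have hindep' : IndepFun X (fun ω ↦ C * Y ω) μ :=
      hindep.comp measurable_id (measurable_const_mul C)
    rw [hindep'.map_add_eq_map_conv_map hXm hCYm, hX, hCY, one_div]
  calc ∫ ω, log (X ω + C * Y ω) ∂μ
      = ∫ x, log x ∂(expMeasure mx⁻¹ ∗ expMeasure (C * my)⁻¹) := by
        rw [← hsum, integral_map (hXm.add hCYm).aemeasurable measurable_log.aestronglyMeasurable]
        rfl
    _ = _ := by
        rw [integral_log_conv_expMeasure (inv_pos.2 hmx) (inv_pos.2 hCmy) (inv_injective.ne hne),
          log_inv, log_inv, inv_sub_inv hCmy.ne' hmx.ne']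
        field_simp
        ring
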